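/- Let n > 1, let U ⊂ ℝ^n be a nonempty open, bounded, connected set, let s ∈ L^∞(U,ℝ^n) be measure preserving, and let 1 ≤ p < ∞. Then for every ε > 0 there exists a C^∞ diffeomorphism S : ℝ^n → ℝ^n with det DS(x) = 1 for every x ∈ ℝ^n such that ∫_U |s(x) − S(x)|^p dx ≤ ε. -/

import Mathlib

open MeasureTheory Metric Set Bornology

namespace VP

/-- smooth volume preserving diffeomorphisms -/
def Good {n : ℕ} (S : EuclideanSpace ℝ (Fin n) → EuclideanSpace ℝ (Fin n)) : Prop :=
  ∃ Sinv : EuclideanSpace ℝ (Fin n) → EuclideanSpace ℝ (Fin n),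
      ContDiff ℝ (⊤ : ℕ∞) S ∧ ContDiff ℝ (⊤ : ℕ∞) Sinv ∧
      Function.LeftInverse Sinv S ∧ Function.RightInverse Sinv S ∧
      (∀ x, LinearMap.det ((fderiv ℝ S x).toLinearMap) = 1)

theorem Good.comp {n : ℕ} {S T : EuclideanSpace ℝ (Fin n) → EuclideanSpace ℝ (Fin n)}
    (hS : Good S) (hT : Good T) : Good (S ∘ T) := by
  obtain ⟨S', h1, h2, h3, h4, h5⟩ := hS
  obtain ⟨T', k1, k2, k3, k4, k5⟩ := hT
  refine ⟨T' ∘ S', h1.comp k1, k2.comp h2, h3.comp k3, h4.comp k4, fun x => ?_⟩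
  rw [fderiv_comp x (h1.differentiable (by simp) _) (k1.differentiable (by simp) _)]
  rw [ContinuousLinearMap.toLinearMap_comp, LinearMap.det_comp, h5, k5, one_mul]

theorem good_shear {n : ℕ} (f : EuclideanSpace ℝ (Fin n) → ℝ) (hf : ContDiff ℝ (⊤ : ℕ∞) f)
    (v : EuclideanSpace ℝ (Fin n)) (hv : ∀ x (t : ℝ), f (x + t • v) = f x) :
    Good (fun x => x + f x • v) := by
  have hs : ∀ g : EuclideanSpace ℝ (Fin n) → ℝ, ContDiff ℝ (⊤ : ℕ∞) g →
      ContDiff ℝ (⊤ : ℕ∞) (fun x => x + g x • v) := fun g hg =>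
    contDiff_id.add (hg.smul contDiff_const)
  refine ⟨fun x => x + (- f x) • v, hs f hf, hs (fun x => - f x) hf.neg, ?_, ?_, ?_⟩
  · intro x
    simp [hv]
  · intro x
    simp only []
    rw [hv]; simp
  · intro x
    have hd : DifferentiableAt ℝ f x := hf.differentiable (by simp) _
    have h1 : HasFDerivAt (fun x => x + f x • v)
        (ContinuousLinearMap.id ℝ _ + (fderiv ℝ f x).smulRight v) x :=
      (hasFDerivAt_id x).add (hd.hasFDerivAt.smul_const v)
    have h0 : fderiv ℝ f x v = 0 := by
      have h2 : HasDerivAt (fun t : ℝ => x + t • v) v 0 := by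
        simpa using ((hasDerivAt_id (0:ℝ)).smul_const v).const_add x
      have h3 : HasDerivAt (fun t : ℝ => f (x + t • v)) (fderiv ℝ f x v) 0 := by
        have hd' : HasFDerivAt f (fderiv ℝ f x) (x + (0:ℝ) • v) := by
          simpa using hd.hasFDerivAt
        exact hd'.comp_hasDerivAt (0:ℝ) h2
      simp only [hv] at h3
      exact h3.unique (hasDerivAt_const _ _)
    rw [h1.fderiv]
    have : ((ContinuousLinearMap.id ℝ (EuclideanSpace ℝ (Fin n)) + (fderiv ℝ f x).smulRight v :
      EuclideanSpace ℝ (Fin n) →L[ℝ] EuclideanSpace ℝ (Fin n))).toLinearMap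
      = LinearMap.transvection (fderiv ℝ f x).toLinearMap v := by
      ext y; simp [LinearMap.transvection.apply]
    rw [this, LinearMap.transvection.det]
    simp [h0]

/-- maps approximable in measure by smooth volume preserving diffeomorphisms -/
def Appr {n : ℕ} (D : EuclideanSpace ℝ (Fin n) → EuclideanSpace ℝ (Fin n)) : Prop :=
  MeasurePreserving D volume volume ∧ (∃ M : ℝ, ∀ x, ‖D x - x‖ ≤ M) ∧
  ∃ M : ℝ, ∀ R : ℝ, ∀ δ : ENNReal, 0 < δ → ∃ S, Good S ∧ (∀ x, ‖S x - x‖ ≤ M) ∧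
    volume (ball 0 R ∩ {x | S x ≠ D x}) ≤ δ

theorem Appr.comp {n : ℕ} {C D : EuclideanSpace ℝ (Fin n) → EuclideanSpace ℝ (Fin n)}
    (hC : Appr C) (hD : Appr D) : Appr (C ∘ D) := by
  obtain ⟨c1, ⟨M1, c2⟩, N1, c3⟩ := hC
  obtain ⟨d1, ⟨M2, d2⟩, N2, d3⟩ := hD
  refine ⟨c1.comp d1, ⟨M1 + M2, fun x => ?_⟩, N1 + N2, fun R δ hδ => ?_⟩
  · calc ‖C (D x) - x‖ = ‖(C (D x) - D x) + (D x - x)‖ := by congr 1; abel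
      _ ≤ _ := (norm_add_le _ _).trans (add_le_add (c2 _) (d2 _))
  · have hδ2 : 0 < δ / 2 := ENNReal.half_pos hδ.ne'
    obtain ⟨S, s1, s2, s3⟩ := c3 (R + M2) _ hδ2
    obtain ⟨T, t1, t2, t3⟩ := d3 R _ hδ2
    refine ⟨S ∘ T, s1.comp t1, fun x => ?_, ?_⟩
    · calc ‖S (T x) - x‖ = ‖(S (T x) - T x) + (T x - x)‖ := by congr 1; abel
        _ ≤ _ := (norm_add_le _ _).trans (add_le_add (s2 _) (t2 _))
    · have hsm : MeasurableSet (ball 0 (R + M2) ∩ {x | S x ≠ C x}) := by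
        obtain ⟨_, h, _⟩ := s1
        exact measurableSet_ball.inter
          (measurableSet_eq_fun h.continuous.measurable c1.measurable).compl
      calc volume (ball 0 R ∩ {x | (S ∘ T) x ≠ (C ∘ D) x})
          ≤ volume (D ⁻¹' (ball 0 (R + M2) ∩ {x | S x ≠ C x}) ∪ (ball 0 R ∩ {x | T x ≠ D x})) := by
            apply measure_mono
            rintro x ⟨hx, hx2⟩
            by_cases h : T x = D x
            · left
              refine ⟨?_, ?_⟩
              · have := d2 x
                have h3 : ‖D x‖ ≤ ‖x‖ + ‖D x - x‖ := by
                  simpa using norm_add_le x (D x - x)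
                simp only [mem_ball, dist_zero_right] at hx ⊢
                linarith
              · simpa [h] using hx2
            · right; exact ⟨hx, h⟩
        _ ≤ _ := measure_union_le _ _
        _ ≤ δ / 2 + δ / 2 := by
            gcongr
            rw [d1.measure_preimage hsm.nullMeasurableSet]
            exact s3
        _ = δ := ENNReal.add_halves δ

/-- grid vector -/
def vec {n : ℕ} (h : ℝ) (c : Fin n → ℤ) : EuclideanSpace ℝ (Fin n) :=
  WithLp.toLp 2 (fun i => h * (c i : ℝ))

/-- index of the grid cell -/
noncomputable def cell {n : ℕ} (h : ℝ) (x : EuclideanSpace ℝ (Fin n)) : Fin n → ℤ :=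
  fun i => ⌊x i / h⌋

theorem cell_add {n : ℕ} {h : ℝ} (hh : 0 < h) (x : EuclideanSpace ℝ (Fin n)) (c : Fin n → ℤ) :
    cell h (x + vec h c) = cell h x + c := by
  ext i
  simp only [cell, vec, PiLp.add_apply, Pi.add_apply]
  rw [add_div, mul_div_cancel_left₀ _ hh.ne', Int.floor_add_intCast]

theorem measurable_cell {n : ℕ} (h : ℝ) : Measurable (cell (n := n) h) := by
  refine measurable_pi_lambda _ fun i => ?_
  exact Int.measurable_floor.comp (by fun_prop)

/-- cell rearrangement -/
noncomputable def rearr {n : ℕ} (h : ℝ) (σ : (Fin n → ℤ) → (Fin n → ℤ))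
    (x : EuclideanSpace ℝ (Fin n)) : EuclideanSpace ℝ (Fin n) :=
  x + vec h (σ (cell h x) - cell h x)

theorem cell_rearr {n : ℕ} {h : ℝ} (hh : 0 < h) (σ : (Fin n → ℤ) → (Fin n → ℤ))
    (x : EuclideanSpace ℝ (Fin n)) : cell h (rearr h σ x) = σ (cell h x) := by
  rw [rearr, cell_add hh]; abel

theorem vec_add {n : ℕ} (h : ℝ) (c d : Fin n → ℤ) : vec h (c + d) = vec h c + vec h d := by
  ext i; simp [vec, mul_add]

theorem rearr_comp {n : ℕ} {h : ℝ} (hh : 0 < h) (σ τ : (Fin n → ℤ) → (Fin n → ℤ)) :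
    rearr h σ ∘ rearr h τ = rearr h (σ ∘ τ) := by
  ext1 x
  simp only [Function.comp]
  rw [rearr, cell_rearr hh, rearr, add_assoc, ← vec_add, rearr]
  congr 2
  simp

theorem measurable_rearr {n : ℕ} (h : ℝ) (σ : (Fin n → ℤ) → (Fin n → ℤ)) :
    Measurable (rearr h σ) := by
  have : Measurable (fun c : Fin n → ℤ => vec h (σ c - c)) := measurable_of_countable _
  exact measurable_id.add (this.comp (measurable_cell h))

theorem measurableSet_cell {n : ℕ} (h : ℝ) (c : Fin n → ℤ) :
    MeasurableSet (cell h ⁻¹' {c}) := measurable_cell h (measurableSet_singleton c)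

theorem volume_eq_tsum {n : ℕ} (h : ℝ) (A : Set (EuclideanSpace ℝ (Fin n)))
    (hA : MeasurableSet A) : volume A = ∑' c, volume (A ∩ cell h ⁻¹' {c}) := by
  rw [← measure_iUnion]
  · congr 1; ext x; simp
  · intro c d hcd
    refine Set.disjoint_left.2 ?_
    rintro x ⟨_, h1⟩ ⟨_, h2⟩
    exact hcd (h1.symm.trans h2)
  · exact fun c => hA.inter (measurableSet_cell h c)

theorem mp_rearr {n : ℕ} {h : ℝ} (hh : 0 < h) (σ : Equiv.Perm (Fin n → ℤ)) :
    MeasurePreserving (rearr h σ) volume volume := by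
  refine ⟨measurable_rearr h σ, ?_⟩
  ext A hA
  rw [Measure.map_apply (measurable_rearr h σ) hA, volume_eq_tsum h _ (measurable_rearr h σ hA),
    volume_eq_tsum h A hA, ← σ.tsum_eq (fun c => volume (A ∩ cell h ⁻¹' {c}))]
  congr 1; ext1 c
  have : rearr h σ ⁻¹' A ∩ cell h ⁻¹' {c} =
      (fun x => x + vec h (σ c - c)) ⁻¹' (A ∩ cell h ⁻¹' {σ c}) := by
    ext x
    simp only [mem_inter_iff, mem_preimage, mem_singleton_iff, cell_add hh]
    constructor
    · rintro ⟨h1, h2⟩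
      rw [rearr, h2] at h1
      exact ⟨h1, by rw [h2]; abel⟩
    · rintro ⟨h1, h2⟩
      have h3 : cell h x = c := by
        have := congrArg (fun z => z - (σ c - c)) h2
        simpa using this
      refine ⟨?_, h3⟩
      rw [rearr, h3]; exact h1
  rw [this, measure_preimage_add_right]

end VP

namespace VP

open Classical in
/-- row shift -/
noncomputable def rowFun {n : ℕ} (i : Fin n) (o : Fin n → ℤ) (m : ℤ) (d : Fin n → ℤ) :
    Fin n → ℤ :=
  if ∀ k, k ≠ i → d k = o k then d + Pi.single i m else d

theorem rowFun_inv {n : ℕ} (i : Fin n) (o : Fin n → ℤ) (m : ℤ) (d : Fin n → ℤ) :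
    rowFun i o (-m) (rowFun i o m d) = d := by
  by_cases hd : ∀ k, k ≠ i → d k = o k
  · have h2 : ∀ k, k ≠ i → (d + Pi.single i m : Fin n → ℤ) k = o k := by
      intro k hk
      simp [hk, hd k hk]
    rw [rowFun, rowFun, if_pos hd, if_pos h2]
    ext k; by_cases hk : k = i
    · subst hk; simp
    · simp [hk]
  · rw [rowFun, rowFun, if_neg hd, if_neg hd]

/-- row shift as a permutation -/
noncomputable def row {n : ℕ} (i : Fin n) (o : Fin n → ℤ) (m : ℤ) : Equiv.Perm (Fin n → ℤ) where
  toFun := rowFun i o m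
  invFun := rowFun i o (-m)
  left_inv := rowFun_inv i o m
  right_inv := fun d => by simpa using rowFun_inv i o (-m) d

/-- cut-off -/
noncomputable def phi (N : ℕ) (t : ℝ) : ℝ :=
  Real.smoothTransition (N * t + 1) * Real.smoothTransition (N * (1 - t))

theorem phi_contDiff (N : ℕ) : ContDiff ℝ (⊤ : ℕ∞) (phi N) := by
  unfold phi
  exact (Real.smoothTransition.contDiff.comp (by fun_prop)).mul
    (Real.smoothTransition.contDiff.comp (by fun_prop))

theorem phi_nonneg (N : ℕ) (t : ℝ) : 0 ≤ phi N t :=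
  mul_nonneg (Real.smoothTransition.nonneg _) (Real.smoothTransition.nonneg _)

theorem phi_le_one (N : ℕ) (t : ℝ) : phi N t ≤ 1 :=
  mul_le_one₀ (Real.smoothTransition.le_one _) (Real.smoothTransition.nonneg _)
    (Real.smoothTransition.le_one _)

open Classical in
theorem phi_eventually (t : ℝ) :
    ∀ᶠ N : ℕ in Filter.atTop, phi N t = if ⌊t⌋ = 0 then 1 else 0 := by
  rcases lt_or_ge t 0 with ht | ht
  · have h0 : ¬ ⌊t⌋ = 0 := by
      rw [Int.floor_eq_zero_iff]; rintro ⟨h, _⟩; linarith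
    obtain ⟨N0, hN0⟩ := exists_nat_gt (1 / (-t))
    filter_upwards [Filter.eventually_ge_atTop N0] with N hN
    rw [if_neg h0, phi, Real.smoothTransition.zero_of_nonpos, zero_mul]
    have : (1 / (-t)) < N := hN0.trans_le (by exact_mod_cast hN)
    rw [div_lt_iff₀ (by linarith)] at this
    linarith
  · rcases lt_or_ge t 1 with ht1 | ht1
    · have h0 : ⌊t⌋ = 0 := Int.floor_eq_zero_iff.2 ⟨ht, ht1⟩
      obtain ⟨N0, hN0⟩ := exists_nat_gt (1 / (1-t))
      filter_upwards [Filter.eventually_ge_atTop N0] with N hN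
      rw [if_pos h0, phi, Real.smoothTransition.one_of_one_le, Real.smoothTransition.one_of_one_le,
        one_mul]
      · have : (1 / (1-t)) < N := hN0.trans_le (by exact_mod_cast hN)
        rw [div_lt_iff₀ (by linarith)] at this
        linarith
      · have : 0 ≤ (N:ℝ) * t := by positivity
        linarith
    · have h0 : ¬ ⌊t⌋ = 0 := by
        rw [Int.floor_eq_zero_iff]; rintro ⟨_, h⟩; linarith
      filter_upwards with N
      rw [if_neg h0, phi, Real.smoothTransition.zero_of_nonpos (x := N * (1 - t)), mul_zero]
      have : 0 ≤ (N:ℝ) * (t - 1) := by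
        have : 0 ≤ t - 1 := by linarith
        positivity
      linarith

/-- coefficient of the smooth shear -/
noncomputable def coef {n : ℕ} (h : ℝ) (i : Fin n) (o : Fin n → ℤ) (m : ℤ) (N : ℕ)
    (x : EuclideanSpace ℝ (Fin n)) : ℝ :=
  (h * m) * ∏ k ∈ Finset.univ.erase i, phi N (x k / h - o k)

theorem coef_contDiff {n : ℕ} (h : ℝ) (i : Fin n) (o : Fin n → ℤ) (m : ℤ) (N : ℕ) :
    ContDiff ℝ (⊤ : ℕ∞) (coef h i o m N) := by
  unfold coef
  refine contDiff_const.mul (contDiff_prod fun k _ => ?_)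
  refine (phi_contDiff N).comp ?_
  fun_prop

theorem coef_le {n : ℕ} (h : ℝ) (i : Fin n) (o : Fin n → ℤ) (m : ℤ) (N : ℕ)
    (x : EuclideanSpace ℝ (Fin n)) : |coef h i o m N x| ≤ |h * m| := by
  unfold coef
  rw [abs_mul]
  refine mul_le_of_le_one_right (abs_nonneg _) ?_
  rw [abs_of_nonneg (Finset.prod_nonneg fun k _ => phi_nonneg _ _)]
  exact Finset.prod_le_one (fun k _ => phi_nonneg _ _) (fun k _ => phi_le_one _ _)

open Classical in
theorem coef_eventually {n : ℕ} (h : ℝ) (i : Fin n) (o : Fin n → ℤ) (m : ℤ)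
    (x : EuclideanSpace ℝ (Fin n)) : ∀ᶠ N : ℕ in Filter.atTop,
    coef h i o m N x = if ∀ k, k ≠ i → cell h x k = o k then h * m else 0 := by
  have h1 : ∀ᶠ N : ℕ in Filter.atTop, ∀ k : Fin n, phi N (x k / h - o k) =
      if ⌊x k / h - o k⌋ = 0 then 1 else 0 :=
    Filter.eventually_all.2 fun k => phi_eventually _
  filter_upwards [h1] with N hN
  unfold coef
  have h2 : ∀ k, (⌊x k / h - o k⌋ = 0) ↔ cell h x k = o k := by
    intro k; rw [Int.floor_sub_intCast, sub_eq_zero]; rfl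
  simp only [hN, h2]
  split_ifs with hc
  · rw [Finset.prod_eq_one, mul_one]
    intro k hk
    rw [if_pos (hc k (Finset.ne_of_mem_erase hk))]
  · push Not at hc
    obtain ⟨k, hk, hk2⟩ := hc
    rw [Finset.prod_eq_zero (i := k), mul_zero]
    · simp [hk]
    · rw [if_neg hk2]

open Classical in
theorem rearr_row {n : ℕ} (h : ℝ) (i : Fin n) (o : Fin n → ℤ) (m : ℤ)
    (x : EuclideanSpace ℝ (Fin n)) : rearr h (row i o m) x =
     x + (if ∀ k, k ≠ i → cell h x k = o k then h * m else 0 : ℝ) • EuclideanSpace.single i 1 := by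
  rw [rearr]
  congr 1
  show vec h (rowFun i o m (cell h x) - cell h x) = _
  rw [rowFun]
  split_ifs with hc
  · ext k
    by_cases hk : k = i
    · subst hk; simp [vec]
    · simp [vec, hk]
  · ext k; simp [vec]

theorem appr_row {n : ℕ} {h : ℝ} (hh : 0 < h) (i : Fin n) (o : Fin n → ℤ) (m : ℤ) :
    Appr (rearr h (row i o m)) := by
  classical
  refine ⟨mp_rearr hh _, ⟨|h * m|, fun x => ?_⟩, |h * m|, fun R δ hδ => ?_⟩
  · rw [rearr_row]
    simp only [add_sub_cancel_left, norm_smul, PiLp.norm_single, norm_one, mul_one]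
    split_ifs
    · rfl
    · rw [norm_zero]; exact abs_nonneg _
  · set S : ℕ → EuclideanSpace ℝ (Fin n) → EuclideanSpace ℝ (Fin n) :=
      fun N x => x + coef h i o m N x • EuclideanSpace.single i (1:ℝ) with hSdef
    have hG : ∀ N, Good (S N) := by
      intro N
      refine good_shear _ (coef_contDiff h i o m N) _ fun x t => ?_
      unfold coef
      congr 1
      refine Finset.prod_congr rfl fun k hk => ?_
      simp [Finset.ne_of_mem_erase hk]
    have hm : ∀ N, MeasurableSet (ball 0 R ∩ {x | S N x ≠ rearr h (row i o m) x}) := by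
      intro N
      obtain ⟨_, hc, _⟩ := hG N
      exact measurableSet_ball.inter
          (measurableSet_eq_fun hc.continuous.measurable (measurable_rearr _ _)).compl
    have ht : Filter.Tendsto (fun N => volume (ball 0 R ∩ {x | S N x ≠ rearr h (row i o m) x}))
        Filter.atTop (nhds (volume (∅ : Set (EuclideanSpace ℝ (Fin n))))) := by
      refine tendsto_measure_of_tendsto_indicator (B := ball 0 R) Filter.atTop hm measurableSet_ball
        measure_ball_lt_top.ne (Filter.Eventually.of_forall fun N => inter_subset_left) ?_
      intro x
      filter_upwards [coef_eventually h i o m x] with N hN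
      simp only [mem_inter_iff, mem_ofPred_eq, mem_empty_iff_false, iff_false, not_and, not_not]
      intro _
      rw [rearr_row, hSdef]
      simp only [hN]
    rw [measure_empty] at ht
    obtain ⟨N, hN⟩ := ((ENNReal.tendsto_nhds_zero.1 ht) δ hδ).exists
    refine ⟨S N, hG N, fun x => ?_, hN⟩
    simp only [hSdef, add_sub_cancel_left, norm_smul, PiLp.norm_single, norm_one, mul_one]
    exact coef_le ..

/-- permutations with approximable rearrangement -/
def PA {n : ℕ} (h : ℝ) (σ : Equiv.Perm (Fin n → ℤ)) : Prop := Appr (rearr h σ)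

theorem PA.mul {n : ℕ} {h : ℝ} (hh : 0 < h) {σ τ : Equiv.Perm (Fin n → ℤ)}
    (hσ : PA h σ) (hτ : PA h τ) : PA h (σ * τ) := by
  have := Appr.comp hσ hτ
  rw [rearr_comp hh] at this
  exact this

/-- one-coordinate move -/
theorem move1 {n : ℕ} (hn : 1 < n) {h : ℝ} (hh : 0 < h) (F : Finset (Fin n → ℤ))
    (x : Fin n → ℤ) (hx : x ∉ F) (i : Fin n) (m : ℤ) (hx' : x + Pi.single i m ∉ F) :
    ∃ σ : Equiv.Perm (Fin n → ℤ), PA h σ ∧ (∀ y ∈ F, σ y = y) ∧ σ x = x + Pi.single i m := by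
  classical
  obtain ⟨j, hj⟩ : ∃ j : Fin n, j ≠ i := by
    have : Nontrivial (Fin n) := Fin.nontrivial_iff_two_le.2 hn
    exact exists_ne i
  obtain ⟨l, hl0, hl⟩ : ∃ l : ℤ, l ≠ 0 ∧ x - Pi.single j l ∉ F := by
    have hinj : Function.Injective (fun l : ℤ => x - Pi.single j l) := by
      intro a b hab
      have := congrFun hab j
      simpa using this
    have hfin : (insert 0 ((fun l : ℤ => x - Pi.single j l) ⁻¹' (F : Set (Fin n → ℤ)))).Finite :=
      (F.finite_toSet.preimage hinj.injOn).insert 0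
    obtain ⟨l, hl⟩ := hfin.infinite_compl.nonempty
    simp only [mem_compl_iff, mem_insert_iff, mem_preimage, Finset.mem_coe, not_or] at hl
    exact ⟨l, hl.1, hl.2⟩
  refine ⟨row i x m * (row j x (-l) * (row i x (-m) * row j x l)), ?_, ?_, ?_⟩
  · exact PA.mul hh (appr_row hh _ _ _) (PA.mul hh (appr_row hh _ _ _)
      (PA.mul hh (appr_row hh _ _ _) (appr_row hh _ _ _)))
  · intro y hy
    have hy1 : y ≠ x := fun h => hx (h ▸ hy)
    have hy2 : y ≠ x + Pi.single i m := fun h => hx' (h ▸ hy)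
    have hy3 : y ≠ x - Pi.single j l := fun h => hl (h ▸ hy)
    show rowFun i x m (rowFun j x (-l) (rowFun i x (-m) (rowFun j x l y))) = y
    by_cases hj' : ∀ k, k ≠ j → y k = x k
    · have e1 : ¬ ∀ k, k ≠ i → y k = x k := by
        intro hi'
        apply hy1; ext k
        by_cases hk : k = j
        · exact hi' k (hk ▸ hj)
        · exact hj' k hk
      have e2 : ¬ ∀ k, k ≠ i → (rowFun j x l y) k = x k := by
        rw [rowFun, if_pos hj']
        intro hi'
        apply hy3; ext k
        by_cases hk : k = j
        · subst hk
          have := hi' k hj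
          simp at this ⊢; linarith
        · simp [hk, hj' k hk]
      rw [show rowFun i x (-m) (rowFun j x l y) = rowFun j x l y by rw [rowFun, if_neg e2],
        rowFun_inv, rowFun, if_neg e1]
    · have e1 : rowFun j x l y = y := by rw [rowFun, if_neg hj']
      rw [e1]
      have e2 : rowFun j x (-l) (rowFun i x (-m) y) = rowFun i x (-m) y := by
        by_cases hi' : ∀ k, k ≠ i → y k = x k
        · rw [rowFun, if_neg]
          rw [rowFun, if_pos hi']
          intro hk
          apply hy2; ext k
          by_cases hki : k = i
          · subst hki
            have := hk k hj.symm
            simp at this ⊢; linarith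
          · simp [hki, hi' k hki]
        · have : rowFun i x (-m) y = y := by rw [rowFun, if_neg hi']
          rw [this, rowFun, if_neg hj']
      rw [e2]
      simpa using rowFun_inv i x (-m) y
  · show rowFun i x m (rowFun j x (-l) (rowFun i x (-m) (rowFun j x l x))) = _
    have e1 : rowFun i x (-m) (rowFun j x l x) = rowFun j x l x := by
      rw [rowFun, if_neg]
      intro hk
      have := hk j hj
      simp [rowFun] at this
      exact hl0 this
    rw [e1, rowFun_inv, rowFun, if_pos (fun _ _ => rfl)]

theorem pa_one {n : ℕ} (hn : 1 < n) {h : ℝ} (hh : 0 < h) : PA (n := n) h 1 := by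
  have : row (⟨0, by omega⟩ : Fin n) 0 0 = 1 := by
    ext1 d
    show rowFun _ _ _ d = d
    simp [rowFun]
  rw [← this]
  exact appr_row hh _ _ _

/-- move avoiding a finite set -/
theorem move {n : ℕ} (hn : 1 < n) {h : ℝ} (hh : 0 < h) (F : Finset (Fin n → ℤ))
    (x y : Fin n → ℤ) (hx : x ∉ F) (hy : y ∉ F) :
    ∃ σ : Equiv.Perm (Fin n → ℤ), PA h σ ∧ (∀ z ∈ F, σ z = z) ∧ σ x = y := by
  classical
  let R : (Fin n → ℤ) → (Fin n → ℤ) → Prop := fun a b =>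
    ∃ σ : Equiv.Perm (Fin n → ℤ), PA h σ ∧ (∀ z ∈ F, σ z = z) ∧ σ a = b
  have htr : ∀ a b c, R a b → R b c → R a c := by
    rintro a b c ⟨σ, s1, s2, s3⟩ ⟨τ, t1, t2, t3⟩
    refine ⟨τ * σ, PA.mul hh t1 s1, fun z hz => ?_, ?_⟩
    · rw [Equiv.Perm.mul_apply, s2 z hz, t2 z hz]
    · rw [Equiv.Perm.mul_apply, s3, t3]
  have hup : ∀ a i v, a ∉ F → Function.update a i v ∉ F → R a (Function.update a i v) := by
    intro a i v ha hb
    have e : a + Pi.single i (v - a i) = Function.update a i v := by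
      ext k
      by_cases hk : k = i
      · subst hk; simp
      · simp [hk]
    rw [← e] at hb ⊢
    exact move1 hn hh F a ha i _ hb
  let i0 : Fin n := ⟨0, by omega⟩
  obtain ⟨N, hN⟩ : ∃ N : ℤ, ∀ z ∈ F, z i0 ≠ N := by
    obtain ⟨N, hN⟩ := ((F.image fun z => z i0).finite_toSet.infinite_compl).nonempty
    refine ⟨N, fun z hz hzN => hN ?_⟩
    simp only [Finset.coe_image, mem_image, Finset.mem_coe]
    exact ⟨z, hz, hzN⟩
  have hNF : ∀ z : Fin n → ℤ, z i0 = N → z ∉ F := fun z hz hzF => hN z hzF hz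
  have key : ∀ s : Finset (Fin n), i0 ∉ s →
      R x (s.piecewise y (Function.update x i0 N)) := by
    intro s
    induction s using Finset.induction_on with
    | empty =>
      intro _
      simp only [Finset.piecewise_empty]
      exact hup _ _ _ hx (hNF _ (by simp))
    | insert a s has ih =>
      intro hs
      simp only [Finset.mem_insert, not_or] at hs
      refine htr _ _ _ (ih hs.2) ?_
      rw [Finset.piecewise_insert]
      refine hup _ _ _ (hNF _ ?_) (hNF _ ?_)
      · simp [hs.2]
      · simp [hs.1, hs.2]
  have h1 := key (Finset.univ.erase i0) (by simp)
  refine htr _ _ _ h1 ?_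
  have e : Function.update ((Finset.univ.erase i0).piecewise y (Function.update x i0 N)) i0 (y i0)
      = y := by
    ext k
    by_cases hk : k = i0
    · subst hk; simp
    · simp [hk]
  have h2 := hup ((Finset.univ.erase i0).piecewise y (Function.update x i0 N)) i0 (y i0)
    (hNF _ (by simp)) (by rw [e]; exact hy)
  rwa [e] at h2

theorem transitive {n : ℕ} (hn : 1 < n) {h : ℝ} (hh : 0 < h) (F : Finset (Fin n → ℤ))
    (f : (Fin n → ℤ) → (Fin n → ℤ)) (hf : InjOn f F) :
    ∃ σ : Equiv.Perm (Fin n → ℤ), PA h σ ∧ ∀ z ∈ F, σ z = f z := by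
  classical
  induction F using Finset.induction_on with
  | empty => exact ⟨1, pa_one hn hh, by simp⟩
  | insert a s has ih =>
    obtain ⟨σ, s1, s2⟩ := ih (hf.mono (by simp))
    obtain ⟨τ, t1, t2, t3⟩ := move hn hh (s.image f) (σ a) (f a) (by
      intro hmem
      obtain ⟨b, hb, hb2⟩ := Finset.mem_image.1 hmem
      rw [← s2 b hb] at hb2
      exact has (σ.injective hb2 ▸ hb)) (by
      intro hmem
      obtain ⟨b, hb, hb2⟩ := Finset.mem_image.1 hmem
      have := hf (by simp [hb]) (by simp) hb2
      exact has (this ▸ hb))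
    refine ⟨τ * σ, PA.mul hh t1 s1, fun z hz => ?_⟩
    rw [Equiv.Perm.mul_apply]
    rcases Finset.mem_insert.1 hz with rfl | hz
    · exact t3
    · rw [s2 z hz]
      exact t2 _ (Finset.mem_image_of_mem f hz)

end VP

namespace VP

theorem cell_dist {n : ℕ} {h : ℝ} (hh : 0 < h) {x y : EuclideanSpace ℝ (Fin n)}
    (hxy : cell h x = cell h y) : ‖x - y‖ ≤ n * h := by
  have h1 : ∀ i, |x i - y i| ≤ h := by
    intro i
    have h2 : ⌊x i / h⌋ = ⌊y i / h⌋ := congrFun hxy i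
    have h3 := Int.abs_sub_lt_one_of_floor_eq_floor h2
    rw [← sub_div, abs_div, abs_of_pos hh, div_lt_one hh] at h3
    exact h3.le
  rw [EuclideanSpace.norm_eq]
  apply Real.sqrt_le_iff.2
  refine ⟨by positivity, ?_⟩
  calc ∑ i, ‖(x - y) i‖ ^ 2 ≤ ∑ i : Fin n, h ^ 2 := by
        refine Finset.sum_le_sum fun i _ => ?_
        exact pow_le_pow_left₀ (norm_nonneg _) (h1 i) 2
    _ = n * h ^ 2 := by simp
    _ ≤ (n * h) ^ 2 := by
        rw [mul_pow]
        gcongr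
        have : n ≤ n ^ 2 := Nat.le_self_pow (by norm_num) n
        exact_mod_cast this

theorem finite_cells {n : ℕ} {h : ℝ} (hh : 0 < h) {A : Set (EuclideanSpace ℝ (Fin n))} {R : ℝ}
    (hA : A ⊆ ball 0 R) : (cell h '' A).Finite := by
  refine Set.Finite.subset (Set.Finite.pi' (t := fun _ : Fin n => Icc ⌊(-R) / h⌋ ⌊R / h⌋)
    fun _ => Set.finite_Icc _ _) ?_
  rintro _ ⟨x, hx, rfl⟩ i
  have h1 : ‖x‖ < R := by simpa using hA hx
  have h2 := abs_le.1 ((PiLp.norm_apply_le x i).trans h1.le)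
  constructor
  · apply Int.floor_le_floor
    gcongr
    exact h2.1
  · apply Int.floor_le_floor
    gcongr
    exact h2.2

theorem cell_div {n : ℕ} (h : ℝ) (N : ℕ) (x : EuclideanSpace ℝ (Fin n)) (i : Fin n) :
    cell (h * N) x i = cell h x i / N := by
  simp only [cell]
  rw [← div_div, Int.floor_div_natCast]

theorem cell_vec {n : ℕ} {h : ℝ} (hh : 0 < h) (d : Fin n → ℤ) : cell h (vec h d) = d := by
  have := cell_add hh 0 d
  rw [zero_add] at this
  rw [this]
  ext i; simp [cell]

theorem volume_cell {n : ℕ} {h : ℝ} (hh : 0 < h) (d : Fin n → ℤ) :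
    volume (cell h ⁻¹' {d}) = volume (cell (n := n) h ⁻¹' {0}) := by
  rw [← measure_preimage_add_right volume (vec h d) (cell h ⁻¹' {d})]
  congr 1
  ext x
  simp [cell_add hh]

theorem volume_cells {n : ℕ} {h : ℝ} (hh : 0 < h) (F : Finset (Fin n → ℤ)) :
    volume (cell h ⁻¹' (F : Set (Fin n → ℤ))) = F.card * volume (cell (n := n) h ⁻¹' {0}) := by
  have : cell h ⁻¹' (F : Set (Fin n → ℤ)) = ⋃ d ∈ F, cell h ⁻¹' {d} := by
    ext x; simp
  rw [this, measure_biUnion_finset]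
  · simp [volume_cell hh]
  · intro c _ d _ hcd
    refine Set.disjoint_left.2 ?_
    intro x h1 h2
    exact hcd (h1.symm.trans h2)
  · exact fun d _ => measurableSet_cell h d

theorem exists_compact_strict {n : ℕ} (hn : 1 < n) (A : Set (EuclideanSpace ℝ (Fin n)))
    (hA : MeasurableSet A) (hfin : volume A ≠ ⊤) {η : ENNReal} (hη : η ≠ 0) :
    ∃ K ⊆ A, IsCompact K ∧ volume (A \ K) ≤ η ∧ (K = ∅ ∨ volume K < volume A) := by
  by_cases h0 : volume A = 0
  · exact ⟨∅, empty_subset _, isCompact_empty, by simp [h0], Or.inl rfl⟩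
  · obtain ⟨x, hx, hx2⟩ := exists_mem_forall_mem_nhdsWithin_pos_measure h0
    have hη2 : η / 2 ≠ 0 := (ENNReal.half_pos hη).ne'
    have : Nontrivial (Fin n) := Fin.nontrivial_iff_two_le.2 hn
    obtain ⟨V, hV1, hV2, hV3⟩ := Set.exists_isOpen_lt_of_lt (μ := volume) {x} (η / 2) (by
      have : volume ({x} : Set (EuclideanSpace ℝ (Fin n))) = 0 := by
        exact measure_singleton x
      rw [this]; exact ENNReal.half_pos hη)
    have hpos : 0 < volume (A ∩ V) := by
      apply hx2
      exact inter_mem_nhdsWithin _ (hV2.mem_nhds (hV1 rfl))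
    obtain ⟨K, hK1, hK2, hK3⟩ := (hA.diff hV2.measurableSet).exists_isCompact_sdiff_lt
      (ne_top_of_le_ne_top hfin (measure_mono sdiff_subset)) hη2
    refine ⟨K, hK1.trans sdiff_subset, hK2, ?_, Or.inr ?_⟩
    · calc volume (A \ K) ≤ volume (((A \ V) \ K) ∪ V) := by
            apply measure_mono
            intro y hy
            by_cases hyV : y ∈ V
            · exact Or.inr hyV
            · exact Or.inl ⟨⟨hy.1, hyV⟩, hy.2⟩
        _ ≤ _ := measure_union_le _ _
        _ ≤ η / 2 + η / 2 := add_le_add hK3.le hV3.le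
        _ = η := ENNReal.add_halves η
    · calc volume K ≤ volume (A \ V) := measure_mono hK1
        _ < volume (A \ V) + volume (A ∩ V) :=
          ENNReal.lt_add_right (ne_top_of_le_ne_top hfin (measure_mono sdiff_subset)) hpos.ne'
        _ = volume A := by rw [add_comm]; exact measure_inter_add_sdiff A hV2.measurableSet

theorem discretize {n : ℕ} (hn : 1 < n) (U : Set (EuclideanSpace ℝ (Fin n)))
    (hU : MeasurableSet U) (s : EuclideanSpace ℝ (Fin n) → EuclideanSpace ℝ (Fin n))
    (hs : Measurable s) (B : Set (EuclideanSpace ℝ (Fin n)))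
    (hB : Measure.map s (volume.restrict U) = volume.restrict B)
    (R : ℝ) (hUR : U ⊆ ball 0 R) (hsR : s '' U ⊆ ball 0 R)
    (δ : ℝ) (hδ : 0 < δ) (hδ1 : δ ≤ 1) (η : ENNReal) (hη : η ≠ 0) :
    ∃ h : ℝ, 0 < h ∧ ∃ σ : Equiv.Perm (Fin n → ℤ), PA h σ ∧
      (∀ x ∈ U, ‖rearr h σ x‖ ≤ R + n + 2) ∧
      volume (U ∩ {x | n * δ < ‖s x - rearr h σ x‖}) ≤ η := by
  classical
  obtain ⟨η', hη'0, hη's⟩ := ENNReal.exists_pos_sum_of_countable hη (Fin n → ℤ)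
  let P : (Fin n → ℤ) → Set (EuclideanSpace ℝ (Fin n)) := fun c => cell δ ⁻¹' {c}
  have hPm : ∀ c, MeasurableSet (P c) := measurableSet_cell δ
  let A : (Fin n → ℤ) → Set (EuclideanSpace ℝ (Fin n)) := fun c => U ∩ s ⁻¹' (P c)
  have hAm : ∀ c, MeasurableSet (A c) := fun c => hU.inter (hs (hPm c))
  have hUfin : volume U ≠ ⊤ := ne_top_of_le_ne_top measure_ball_lt_top.ne (measure_mono hUR)
  have hAfin : ∀ c, volume (A c) ≠ ⊤ := fun c =>
    ne_top_of_le_ne_top hUfin (measure_mono inter_subset_left)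
  have hAP : ∀ c, volume (A c) ≤ volume (P c) := by
    intro c
    have h1 : Measure.map s (volume.restrict U) (P c) = volume (A c) := by
      rw [Measure.map_apply hs (hPm c), Measure.restrict_apply (hs (hPm c)), inter_comm]
    rw [← h1, hB]
    exact Measure.restrict_apply_le _ _
  have hK : ∀ c, ∃ K ⊆ A c, IsCompact K ∧ volume (A c \ K) ≤ η' c ∧
      (K = ∅ ∨ volume K < volume (A c)) := fun c =>
    exists_compact_strict hn (A c) (hAm c) (hAfin c) (by simpa using (hη'0 c).ne')
  choose K hKA hKc hKη hKs using hK
  -- finite set of target cells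
  have hJfin : (cell δ '' (s '' U)).Finite := finite_cells hδ hsR
  let J : Finset (Fin n → ℤ) := hJfin.toFinset
  have hJ : ∀ c x, x ∈ A c → c ∈ J := by
    intro c x hx
    simp only [J, Set.Finite.mem_toFinset]
    exact ⟨s x, ⟨x, hx.1, rfl⟩, hx.2⟩
  have hdisj : ∀ c d, c ≠ d → Disjoint (K c) (K d) := by
    intro c d hcd
    refine Set.disjoint_left.2 fun x hx hy => hcd ?_
    have h1 := (hKA c hx).2
    have h2 := (hKA d hy).2
    exact h1.symm.trans h2
  obtain ⟨r, hr0, hr1, hr2⟩ : ∃ r : ℝ, 0 < r ∧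
      (∀ c ∈ J, K c = ∅ ∨ volume (cthickening r (K c)) < volume (P c)) ∧
      (∀ c ∈ J, ∀ d ∈ J, c ≠ d → Disjoint (cthickening r (K c)) (cthickening r (K d))) := by
    have e1 : ∀ᶠ r in nhdsWithin (0:ℝ) (Ioi 0),
        ∀ c ∈ J, K c = ∅ ∨ volume (cthickening r (K c)) < volume (P c) := by
      rw [Filter.eventually_all_finset]
      intro c _
      rcases hKs c with h | h
      · exact Filter.Eventually.of_forall fun _ => Or.inl h
      · have ht := tendsto_measure_cthickening_of_isCompact (μ := volume) (hKc c)
        have := (ht.eventually_lt_const (h.trans_le (hAP c))).filter_mono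
          (nhdsWithin_le_nhds (s := Ioi (0:ℝ)))
        filter_upwards [this] with r hr using Or.inr hr
    have e2 : ∀ᶠ r in nhdsWithin (0:ℝ) (Ioi 0), ∀ c ∈ J, ∀ d ∈ J, c ≠ d →
        Disjoint (cthickening r (K c)) (cthickening r (K d)) := by
      rw [Filter.eventually_all_finset]
      intro c _
      rw [Filter.eventually_all_finset]
      intro d _
      by_cases hcd : c = d
      · exact Filter.Eventually.of_forall fun _ h => absurd hcd h
      · obtain ⟨ρ, hρ, hρ2⟩ := (hdisj c d hcd).exists_cthickenings (hKc c) (hKc d).isClosed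
        filter_upwards [Ioo_mem_nhdsGT hρ] with r hr _
        exact hρ2.mono (cthickening_mono hr.2.le _) (cthickening_mono hr.2.le _)
    obtain ⟨r, hr⟩ := (e1.and (e2.and self_mem_nhdsWithin)).exists
    exact ⟨r, hr.2.2, hr.1, hr.2.1⟩
  -- the fine grid
  obtain ⟨N, hN⟩ := exists_nat_gt (max 1 (n * δ / min r 1))
  have hN1 : (1:ℝ) < N := (le_max_left _ _).trans_lt hN
  have hN0 : (0:ℝ) < N := by linarith
  have hNne : (N : ℤ) ≠ 0 := by
    have : N ≠ 0 := by rintro rfl; simp at hN0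
    exact_mod_cast this
  have hm0 : 0 < min r 1 := lt_min hr0 one_pos
  obtain ⟨h, hh, hhN, hhr, hh1⟩ : ∃ h : ℝ, 0 < h ∧ h * N = δ ∧ n * h ≤ r ∧ n * h ≤ 1 := by
    refine ⟨δ / N, by positivity, by field_simp, ?_⟩
    have h1 : n * δ / min r 1 < N := (le_max_right _ _).trans_lt hN
    rw [div_lt_iff₀ hm0] at h1
    have h2 : n * (δ / N) ≤ min r 1 := by
      rw [← mul_div_assoc, div_le_iff₀ hN0]; linarith
    exact ⟨h2.trans (min_le_left _ _), h2.trans (min_le_right _ _)⟩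
  have hKball : ∀ c, K c ⊆ ball 0 R := fun c => (hKA c).trans (inter_subset_left.trans hUR)
  let T : (Fin n → ℤ) → Set (Fin n → ℤ) := fun c => {d | ∀ i, d i / N = c i}
  have hPT : ∀ c, P c = cell h ⁻¹' (T c) := by
    intro c
    ext x
    simp only [P, T, mem_preimage, mem_singleton_iff]
    rw [← hhN, funext_iff]
    simp only [cell_div]
    rfl
  have hTfin : ∀ c, (T c).Finite := by
    intro c
    refine Set.Finite.subset (Set.Finite.pi' (t := fun i : Fin n => Icc (c i * N) (c i * N + N))
      fun _ => Set.finite_Icc _ _) ?_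
    intro d hd i
    have h1 : d i / N = c i := hd i
    have hNp : (0:ℤ) < N := by exact_mod_cast hN0
    have h2 := Int.mul_ediv_add_emod (d i) N
    have h3 := Int.emod_nonneg (d i) hNne
    have h4 := Int.emod_lt_of_pos (d i) hNp
    rw [h1] at h2
    constructor <;> linarith
  have hinj : ∀ c, ∃ e : (Fin n → ℤ) → (Fin n → ℤ), c ∈ J →
      (cell h '' K c) ⊆ e ⁻¹' (T c) ∧ InjOn e (cell h '' K c) := by
    intro c
    by_cases hc : c ∈ J
    · have hfin := finite_cells hh (hKball c)
      have : (cell h '' K c).encard ≤ (T c).encard := by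
        rcases hr1 c hc with h0 | hlt
        · simp [h0]
        · rw [hfin.encard_eq_coe_toFinset_card, (hTfin c).encard_eq_coe_toFinset_card]
          have h1 : volume (cell h ⁻¹' (cell h '' K c)) ≤ volume (cthickening r (K c)) := by
            apply measure_mono
            rintro x ⟨y, hy, hxy⟩
            refine mem_cthickening_of_dist_le x y r _ hy ?_
            rw [dist_eq_norm]
            exact (cell_dist hh hxy.symm).trans hhr
          have h2 := h1.trans_lt hlt
          rw [hPT c, ← hfin.coe_toFinset, ← (hTfin c).coe_toFinset, volume_cells hh,
            volume_cells hh] at h2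
          have h3 := lt_of_mul_lt_mul_right' h2
          have h4 : hfin.toFinset.card < (hTfin c).toFinset.card := by exact_mod_cast h3
          exact_mod_cast h4.le
      obtain ⟨e, he⟩ := hfin.exists_injOn_of_encard_le this
      exact ⟨e, fun _ => he⟩
    · exact ⟨id, fun h => absurd h hc⟩
  choose e he using hinj
  let f : (Fin n → ℤ) → (Fin n → ℤ) := fun d =>
    if hd : ∃ c, c ∈ J ∧ d ∈ cell h '' K c then e hd.choose d else d
  have hf : ∀ c ∈ J, ∀ d ∈ cell h '' K c, f d = e c d := by
    intro c hc d hd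
    have hex : ∃ c, c ∈ J ∧ d ∈ cell h '' K c := ⟨c, hc, hd⟩
    have h1 : hex.choose = c := by
      by_contra hne
      obtain ⟨hc', x, hx, hxd⟩ := hex.choose_spec
      obtain ⟨y, hy, hyd⟩ := hd
      refine Set.disjoint_left.1 (hr2 _ hc' _ hc hne) (self_subset_cthickening _ hx) ?_
      refine mem_cthickening_of_dist_le x y r _ hy ?_
      rw [dist_eq_norm]
      exact (cell_dist hh (hxd.trans hyd.symm)).trans hhr
    simp only [f, dif_pos hex, h1]
  have hfT : ∀ c ∈ J, ∀ d ∈ cell h '' K c, f d ∈ T c := by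
    intro c hc d hd
    rw [hf c hc d hd]
    exact (he c hc).1 hd
  -- the big finite set
  have hFfin := finite_cells (n := n) hh (subset_refl (ball 0 (R + n + 1)))
  let F : Finset (Fin n → ℤ) := hFfin.toFinset
  have hFU : ∀ x ∈ U, cell h x ∈ F := by
    intro x hx
    simp only [F, Set.Finite.mem_toFinset]
    refine ⟨x, ?_, rfl⟩
    have h1 := hUR hx
    simp only [mem_ball, dist_zero_right] at h1 ⊢
    have : (0:ℝ) ≤ n := by positivity
    linarith
  have hTF : ∀ c ∈ J, ∀ d ∈ T c, d ∈ F := by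
    intro c hc d hd
    simp only [J, Set.Finite.mem_toFinset] at hc
    obtain ⟨y, hy, hyc⟩ := hc
    simp only [F, Set.Finite.mem_toFinset]
    refine ⟨vec h d, ?_, cell_vec hh d⟩
    have h1 : vec h d ∈ P c := by
      rw [hPT, mem_preimage, cell_vec hh]; exact hd
    have h2 : cell δ (vec h d) = cell δ y := by rw [hyc]; exact h1
    have h3 := cell_dist hδ h2
    have h4 := hsR hy
    simp only [mem_ball, dist_zero_right] at h4 ⊢
    have h5 : ‖vec h d‖ ≤ ‖vec h d - y‖ + ‖y‖ := by
      simpa using norm_add_le (vec h d - y) y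
    have h6 : (n:ℝ) * δ ≤ n := mul_le_of_le_one_right (by positivity) hδ1
    linarith
  obtain ⟨g, hg⟩ := Finset.exists_equiv_extend_of_card_eq (α := F) (t := F) (by simp)
    (s := Finset.univ.filter fun d : F => ∃ c ∈ J, (d : Fin n → ℤ) ∈ cell h '' K c)
    (f := fun d => f d) (by
      intro d hd
      obtain ⟨a, ha, rfl⟩ := Finset.mem_image.1 hd
      obtain ⟨c, hc, hac⟩ := (Finset.mem_filter.1 ha).2
      exact hTF c hc _ (hfT c hc _ hac)) (by
      intro a ha b hb hab
      obtain ⟨c, hc, hac⟩ := (Finset.mem_filter.1 ha).2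
      obtain ⟨c', hc', hbc⟩ := (Finset.mem_filter.1 hb).2
      have h1 := hfT c hc _ hac
      have h2 := hfT c' hc' _ hbc
      simp only [] at hab
      rw [hab] at h1
      have hcc : c = c' := by
        ext i; rw [← h1 i, ← h2 i]
      subst hcc
      rw [hf c hc _ hac, hf c hc _ hbc] at hab
      exact Subtype.ext ((he c hc).2 hac hbc hab))
  obtain ⟨σ, hσ, hσ2⟩ := transitive hn hh F (fun d => if hd : d ∈ F then g ⟨d, hd⟩ else d) (by
    intro a ha b hb hab
    have ha' : a ∈ F := ha
    have hb' : b ∈ F := hb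
    simp only [dif_pos ha', dif_pos hb'] at hab
    have := g.injective (Subtype.ext hab)
    exact congrArg Subtype.val this)
  refine ⟨h, hh, σ, hσ, ?_, ?_⟩
  · intro x hx
    have h1 : cell h (rearr h σ x) ∈ F := by
      rw [cell_rearr hh, hσ2 _ (hFU x hx), dif_pos (hFU x hx)]
      exact Subtype.property _
    simp only [F, Set.Finite.mem_toFinset] at h1
    obtain ⟨y, hy, hyx⟩ := h1
    have h3 := (cell_dist hh hyx.symm).trans hh1
    have h5 : ‖rearr h σ x‖ ≤ ‖rearr h σ x - y‖ + ‖y‖ := by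
      simpa using norm_add_le (rearr h σ x - y) y
    simp only [mem_ball, dist_zero_right] at hy
    linarith
  · calc volume (U ∩ {x | n * δ < ‖s x - rearr h σ x‖}) ≤ volume (⋃ c, (A c \ K c)) := by
          apply measure_mono
          rintro x ⟨hx, hx2⟩
          rw [mem_iUnion]
          refine ⟨cell δ (s x), ⟨hx, rfl⟩, fun hxK => ?_⟩
          have hc : cell δ (s x) ∈ J := hJ _ x ⟨hx, rfl⟩
          have hd : cell h x ∈ cell h '' K (cell δ (s x)) := ⟨x, hxK, rfl⟩
          have h1 : cell h (rearr h σ x) ∈ T (cell δ (s x)) := by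
            rw [cell_rearr hh, hσ2 _ (hFU x hx), dif_pos (hFU x hx), hg _ (by
              simp only [Finset.mem_filter, Finset.mem_univ, true_and]
              exact ⟨_, hc, hd⟩)]
            exact hfT _ hc _ hd
          have h2 : rearr h σ x ∈ P (cell δ (s x)) := by rw [hPT]; exact h1
          have h3 : cell δ (s x) = cell δ (rearr h σ x) := h2.symm
          exact absurd (cell_dist hδ h3) (not_le.2 hx2)
      _ ≤ ∑' c, volume (A c \ K c) := measure_iUnion_le _
      _ ≤ ∑' c, (η' c : ENNReal) := ENNReal.tsum_le_tsum hKη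
      _ ≤ η := hη's.le

end VP

open VP

theorem stmt_1 (n : ℕ) (hn : 1 < n)
    (U : Set (EuclideanSpace ℝ (Fin n))) (hne : U.Nonempty) (hUo : IsOpen U)
    (hUb : IsBounded U) (hUc : IsConnected U)
    (s : EuclideanSpace ℝ (Fin n) → EuclideanSpace ℝ (Fin n))
    (hs : Measurable s) (hsb : IsBounded (s '' U))
    (hmp : ∃ B : Set (EuclideanSpace ℝ (Fin n)), MeasurableSet B ∧
      Measure.map s (volume.restrict U) = volume.restrict B)
    (p : ℝ) (hp : 1 ≤ p) (ε : ℝ) (hε : 0 < ε) :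
    ∃ S Sinv : EuclideanSpace ℝ (Fin n) → EuclideanSpace ℝ (Fin n),
      ContDiff ℝ (⊤ : ℕ∞) S ∧ ContDiff ℝ (⊤ : ℕ∞) Sinv ∧
      Function.LeftInverse Sinv S ∧ Function.RightInverse Sinv S ∧
      (∀ x, LinearMap.det ((fderiv ℝ S x).toLinearMap) = 1) ∧
      (∫ x in U, ‖s x - S x‖ ^ p) ≤ ε := by
  obtain ⟨B, hBm, hB⟩ := hmp
  have hp0 : 0 ≤ p := by linarith
  have hUm := hUo.measurableSet
  obtain ⟨R, hR⟩ := (hUb.union hsb).subset_ball 0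
  have hUR : U ⊆ ball 0 R := subset_union_left.trans hR
  have hsR : s '' U ⊆ ball 0 R := subset_union_right.trans hR
  have hR0 : 0 < R := by
    obtain ⟨x, hx⟩ := hne
    have := hUR hx
    simp only [mem_ball, dist_zero_right] at this
    exact (norm_nonneg x).trans_lt this
  have hUfin : volume U ≠ ⊤ := ne_top_of_le_ne_top measure_ball_lt_top.ne (measure_mono hUR)
  have hn0 : (0:ℝ) < n := by exact_mod_cast (by omega : 0 < n)
  -- first error
  obtain ⟨δ, hδ0, hδ1, hδ2, hδ3⟩ : ∃ δ : ℝ, 0 < δ ∧ δ ≤ 1 ∧ n * δ ≤ 1 ∧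
      (n * δ) * volume.real U ≤ ε / 3 := by
    have hV : 0 ≤ volume.real U := measureReal_nonneg
    refine ⟨min (1 / n) (ε / 3 / (n * (volume.real U + 1))), by positivity, ?_, ?_, ?_⟩
    · refine (min_le_left _ _).trans ?_
      rw [div_le_one hn0]
      exact_mod_cast hn.le
    · calc n * min (1 / (n:ℝ)) (ε / 3 / (n * (volume.real U + 1))) ≤ n * (1 / n) := by
            gcongr; exact min_le_left _ _
        _ = 1 := by field_simp
    · calc n * min (1 / (n:ℝ)) (ε / 3 / (n * (volume.real U + 1))) * volume.real U
          ≤ n * (ε / 3 / (n * (volume.real U + 1))) * (volume.real U + 1) := by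
            gcongr
            · exact min_le_right _ _
            · linarith
        _ = ε / 3 := by field_simp
  set C : ℝ := R + (R + n + 2) with hC
  have hC0 : 0 < C := by positivity
  obtain ⟨h, hh, σ, hσ, hσ1, hσ2⟩ := discretize hn U hUm s hs B hB R hUR hsR δ hδ0 hδ1
    (ENNReal.ofReal (ε / 3 / C ^ p)) (by
      have : 0 < ε / 3 / C ^ p := by positivity
      simpa using this)
  obtain ⟨d1, ⟨M1, d2⟩, M, d3⟩ := hσ
  set C2 : ℝ := R + (|M| + R) with hC2
  have hC20 : 0 < C2 := by positivity
  obtain ⟨S, hS, hSM, hSv⟩ := d3 R (ENNReal.ofReal (ε / 3 / C2 ^ p)) (by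
      have : 0 < ε / 3 / C2 ^ p := by positivity
      simpa using this)
  obtain ⟨Sinv, g1, g2, g3, g4, g5⟩ := hS
  refine ⟨S, Sinv, g1, g2, g3, g4, g5, ?_⟩
  set X := U ∩ {x | n * δ < ‖s x - rearr h σ x‖} with hX
  set Y := ball 0 R ∩ {x | S x ≠ rearr h σ x} with hY
  have hXm : MeasurableSet X := hUm.inter
    (measurableSet_lt measurable_const (hs.sub d1.measurable).norm)
  have hYm : MeasurableSet Y := measurableSet_ball.inter
    (measurableSet_eq_fun g1.continuous.measurable d1.measurable).compl
  have hXi : Integrable (X.indicator fun _ => C ^ p) (volume.restrict U) :=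
    (integrableOn_const hUfin).indicator hXm
  have hYi : Integrable (Y.indicator fun _ => C2 ^ p) (volume.restrict U) :=
    (integrableOn_const hUfin).indicator hYm
  have hci : Integrable (fun _ => n * δ) (volume.restrict U) := integrableOn_const hUfin
  have hbound : ∀ x ∈ U, ‖s x - S x‖ ^ p ≤
      n * δ + X.indicator (fun _ => C ^ p) x + Y.indicator (fun _ => C2 ^ p) x := by
    intro x hx
    have hsx : ‖s x‖ < R := by simpa using hsR (mem_image_of_mem s hx)
    have hxR : ‖x‖ < R := by simpa using hUR hx
    have i1 : 0 ≤ X.indicator (fun _ => C ^ p) x := indicator_nonneg (fun _ _ => by positivity) x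
    have i2 : 0 ≤ Y.indicator (fun _ => C2 ^ p) x := indicator_nonneg (fun _ _ => by positivity) x
    have i3 : 0 ≤ n * δ := by positivity
    by_cases hy : x ∈ Y
    · have h1 : ‖s x - S x‖ ≤ C2 := by
        have h2 : ‖S x‖ ≤ ‖S x - x‖ + ‖x‖ := by simpa using norm_add_le (S x - x) x
        have h3 := hSM x
        have h4 := le_abs_self M
        have h5 := norm_sub_le (s x) (S x)
        linarith
      have h2 := Real.rpow_le_rpow (norm_nonneg _) h1 hp0
      rw [indicator_of_mem hy]
      linarith
    · have hSx : S x = rearr h σ x := by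
        by_contra hne'
        exact hy ⟨hUR hx, hne'⟩
      rw [hSx]
      by_cases hxX : x ∈ X
      · have h1 : ‖s x - rearr h σ x‖ ≤ C := by
          have h3 := hσ1 x hx
          have h5 := norm_sub_le (s x) (rearr h σ x)
          linarith
        have h2 := Real.rpow_le_rpow (norm_nonneg _) h1 hp0
        rw [indicator_of_mem hxX]
        linarith
      · have h1 : ‖s x - rearr h σ x‖ ≤ n * δ := by
          by_contra hlt
          exact hxX ⟨hx, not_le.1 hlt⟩
        have h2 := Real.rpow_le_rpow (norm_nonneg _) h1 hp0
        have h3 : (n * δ) ^ p ≤ n * δ := by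
          have := Real.rpow_le_rpow_of_exponent_ge (by positivity : 0 < n * δ) hδ2 hp
          simpa using this
        linarith
  have hind : ∀ (Z : Set (EuclideanSpace ℝ (Fin n))) (c : ℝ), 0 < c → MeasurableSet Z →
      volume Z ≤ ENNReal.ofReal (ε / 3 / c) →
      ∫ x in U, Z.indicator (fun _ => c) x ≤ ε / 3 := by
    intro Z c hc hZ hZv
    rw [integral_indicator_const c hZ, smul_eq_mul]
    have h1 : (volume.restrict U).real Z ≤ ε / 3 / c := by
      refine ENNReal.toReal_le_of_le_ofReal (by positivity) ?_
      exact (Measure.restrict_apply_le _ _).trans hZv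
    calc _ ≤ ε / 3 / c * c := by gcongr
      _ = ε / 3 := by field_simp
  calc ∫ x in U, ‖s x - S x‖ ^ p
      ≤ ∫ x in U, (n * δ + X.indicator (fun _ => C ^ p) x + Y.indicator (fun _ => C2 ^ p) x) := by
        refine integral_mono_of_nonneg (Filter.Eventually.of_forall fun x => by positivity)
          ((hci.add hXi).add hYi) ?_
        filter_upwards [ae_restrict_mem hUm] with x hx using hbound x hx
    _ = (∫ x in U, n * δ) + (∫ x in U, X.indicator (fun _ => C ^ p) x)
          + ∫ x in U, Y.indicator (fun _ => C2 ^ p) x := by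
        have q1 := integral_add (hci.add hXi) hYi
        have q2 := integral_add hci hXi
        rw [← q2]
        exact q1
    _ ≤ ε / 3 + ε / 3 + ε / 3 := by
        refine add_le_add (add_le_add ?_ (hind X _ (by positivity) hXm hσ2))
          (hind Y _ (by positivity) hYm hSv)
        rw [setIntegral_const, smul_eq_mul, mul_comm]
        exact hδ3
    _ = ε := by ring
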